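/- Let d, k be integers with 1 ≤ k ≤ d and let c : ℤ^d → ℤ be a d-dimensional configuration. Assume that for every (k−1)-dimensional linear subspace V ⊆ ℝ^d the configuration c has a periodizer f whose support satisfies supp(f) ∩ V = {0} (intersecting supp(f), viewed inside ℝ^d, with V). Then there exist finitely many functions c_1, …, c_m : ℤ^d → ℤ, each of which is k-periodic, such that c = c_1 + … + c_m. -/

import Mathlib

namespace PaperFormal

/-- View an integer vector inside `ℝ^d`. -/
def intVecR {d : ℕ} (u : Fin d → ℤ) : Fin d → ℝ := fun i => (u i : ℝ)

/-- View an integer vector inside `ℚ^d`. -/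
def intVecQ {d : ℕ} (u : Fin d → ℤ) : Fin d → ℚ := fun i => (u i : ℚ)

/-- A (Laurent) polynomial: a finitely supported integer-valued function on `ℤ^d`. -/
def IsPoly {d : ℕ} (f : (Fin d → ℤ) → ℤ) : Prop := (Function.support f).Finite

/-- The product `(fc)(u) = ∑_v f(v) · c(u − v)` of a polynomial `f` with `c : ℤ^d → ℤ`. -/
noncomputable def polyApply {d : ℕ} (f : (Fin d → ℤ) → ℤ) (c : (Fin d → ℤ) → ℤ) :
    (Fin d → ℤ) → ℤ := fun u => ∑ᶠ v, f v * c (u - v)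

/-- The product `(fc)(u) = ∑_v f(v) · c(u − v)` of a polynomial `f` with `c : ℤ^d → ℂ`. -/
noncomputable def polyApplyC {d : ℕ} (f : (Fin d → ℤ) → ℤ) (c : (Fin d → ℤ) → ℂ) :
    (Fin d → ℤ) → ℂ := fun u => ∑ᶠ v, (f v : ℂ) * c (u - v)

/-- `c` is `v`-periodic: `c(u + v) = c(u)` for all `u`. -/
def Periodic {d : ℕ} (c : (Fin d → ℤ) → ℤ) (v : Fin d → ℤ) : Prop := ∀ u, c (u + v) = c u

/-- `c : ℤ^d → ℂ` is `v`-periodic. -/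
def PeriodicC {d : ℕ} (c : (Fin d → ℤ) → ℂ) (v : Fin d → ℤ) : Prop := ∀ u, c (u + v) = c u

/-- `c` is `k`-periodic: it has `k` periods that are linearly independent over `ℚ`. -/
def KPeriodic {d : ℕ} (k : ℕ) (c : (Fin d → ℤ) → ℤ) : Prop :=
  ∃ v : Fin k → (Fin d → ℤ),
    (LinearIndependent ℚ fun i => intVecQ (v i)) ∧ ∀ i, Periodic c (v i)

/-- `c` is strongly periodic: it is `d`-periodic. -/
def StronglyPeriodic {d : ℕ} (c : (Fin d → ℤ) → ℤ) : Prop := KPeriodic d c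

/-- `c : ℤ^d → ℂ` is strongly periodic. -/
def StronglyPeriodicC {d : ℕ} (c : (Fin d → ℤ) → ℂ) : Prop :=
  ∃ v : Fin d → (Fin d → ℤ),
    (LinearIndependent ℚ fun i => intVecQ (v i)) ∧ ∀ i, PeriodicC c (v i)

/-- Two nonzero integer vectors are non-parallel if they are linearly independent over `ℚ`. -/
def NonParallel {d : ℕ} (v w : Fin d → ℤ) : Prop :=
  LinearIndependent ℚ ![intVecQ v, intVecQ w]

/-- A line polynomial in direction `v`: a polynomial whose support contains at least two points
and is contained in `u + ℚv` for some `u ∈ ℤ^d`. -/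
def IsLinePoly {d : ℕ} (f : (Fin d → ℤ) → ℤ) (v : Fin d → ℤ) : Prop :=
  IsPoly f ∧ v ≠ 0 ∧ 2 ≤ (Function.support f).ncard ∧
    ∃ u : Fin d → ℤ, ∀ w ∈ Function.support f, ∃ q : ℚ, intVecQ w = intVecQ u + q • intVecQ v

/-- The difference polynomial `X^v − 1`: value `1` at `v`, value `−1` at `0`, and `0` elsewhere. -/
def diffPoly {d : ℕ} (v : Fin d → ℤ) : (Fin d → ℤ) → ℤ :=
  fun u => if u = v then 1 else if u = 0 then -1 else 0

/-- `c : ℤ^d → ℂ` is periodic in direction `v`: it is `kv`-periodic for some nonzero integer `k`. -/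
def PeriodicInDirC {d : ℕ} (c : (Fin d → ℤ) → ℂ) (v : Fin d → ℤ) : Prop :=
  ∃ k : ℤ, k ≠ 0 ∧ PeriodicC c (k • v)

/-- `c : ℤ^d → ℂ` is `V`-periodic for a linear subspace `V ⊆ ℝ^d`: it is periodic in
direction `v` for every nonzero integer vector `v` lying in `V`. -/
def VPeriodicC {d : ℕ} (V : Submodule ℝ (Fin d → ℝ)) (c : (Fin d → ℤ) → ℂ) : Prop :=
  ∀ v : Fin d → ℤ, v ≠ 0 → intVecR v ∈ V → PeriodicInDirC c v

/-- The discrete cube `C_m + t`. -/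
def cube {d : ℕ} (m : ℕ) (t : Fin d → ℤ) : Set (Fin d → ℤ) :=
  {u | ∀ i, |u i - t i| ≤ (m : ℤ)}

/-- `c : ℤ^d → ℤ` is sparse: for some positive integer `a`,
`|supp(c) ∩ (C_m + t)| ≤ a·m` for all positive `m` and all `t`. -/
def Sparse {d : ℕ} (c : (Fin d → ℤ) → ℤ) : Prop :=
  ∃ a : ℕ, 0 < a ∧ ∀ m : ℕ, 0 < m → ∀ t : Fin d → ℤ,
    (Function.support c ∩ cube m t).ncard ≤ a * m

/-- A `v`-fiber: a function whose support is contained in `w + ℚv` for some `w ∈ ℤ^d`. -/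
def IsFiber {d : ℕ} (e : (Fin d → ℤ) → ℤ) (v : Fin d → ℤ) : Prop :=
  ∃ w : Fin d → ℤ, ∀ x ∈ Function.support e, ∃ q : ℚ, intVecQ x = intVecQ w + q • intVecQ v

/-- `c` is a sum of finitely many periodic `v`-fibers. -/
def FinSumPeriodicFibers {d : ℕ} (v : Fin d → ℤ) (c : (Fin d → ℤ) → ℤ) : Prop :=
  ∃ (r : ℕ) (e : Fin r → ((Fin d → ℤ) → ℤ)), c = ∑ j, e j ∧
    ∀ j, IsFiber (e j) v ∧ ∃ w : Fin d → ℤ, w ≠ 0 ∧ Periodic (e j) w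

end PaperFormal

/-!
Let Laurent polynomials act on functions by convolution, so that `u` is a period of `c` exactly when
`X ^ u - 1` lies in the annihilator of `c`.

If `q` annihilates the bounded integer function `c`, then so does `q (X ^ p)` for every large prime
`p`, because `q (X ^ p) ≡ q ^ p` modulo `p`. Hence `q (X ^ (1 + j n))` annihilates `c` for a
suitable `n ≠ 0` and all `j`. Eliminating the nonzero exponents of `q` one after the other leaves a
product of differences `X ^ (n v) - 1`, where `v` runs through these exponents. Thus for each
subspace `W` of dimension less than `k` a product of differences with directions outside `W`
annihilates `c`.

Averaging a bounded real function along the directions of such a product splits it into functions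
that are periodic in one more direction; after `k` rounds, `c` is a sum of real `k`-periodic
functions.

To return to integer values, use that differences act surjectively on the functions polynomial along
a given subspace, over `ℤ` as well as over `ℝ`. A product of differences that annihilates all real
summands but one maps the remaining one to an integer function. Dividing that image by the
differences over `ℤ` recovers the summand up to functions polynomial along larger subspaces, so one
proceeds by induction on the dimension. A function polynomial along more than `k` directions is
again a sum of `k`-periodic ones: in the plane of two such directions it is annihilated by a product
of differences with pairwise distinct directions.
-/

namespace PaperFormal

section ShiftModule

open AddMonoidAlgebra

variable {G A B : Type*} [AddCommGroup G] [AddCommGroup A] [AddCommGroup B]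

/-- The translation action of `G` on the functions `G → A`, as endomorphisms of the additive group
of these functions. -/
def shiftHom (G A : Type*) [AddCommGroup G] [AddCommGroup A] :
    Multiplicative G →* Module.End ℤ (G → A) where
  toFun v :=
    { toFun c x := c (x - v.toAdd)
      map_add' _ _ := rfl
      map_smul' _ _ := rfl }
  map_one' := by
    ext c x
    simp
  map_mul' v w := by
    ext c x
    simp [sub_sub]

/-- Laurent polynomials act on the functions `G → A` by convolution: the monomial `X ^ v` translates
by `v`. On configurations this is the product `fc` of the paper, see `polyApply_eq_smul`. -/
noncomputable scoped instance shiftModule : Module ℤ[G] (G → A) :=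
  Module.compHom _ (AddMonoidAlgebra.lift ℤ (Module.End ℤ (G → A)) G (shiftHom G A)).toRingHom

lemma single_smul_apply (v : G) (n : ℤ) (c : G → A) (x : G) :
    ((single v n : ℤ[G]) • c) x = n • c (x - v) := by
  change AddMonoidAlgebra.lift ℤ (Module.End ℤ (G → A)) G (shiftHom G A) (single v n) c x = _
  simp [shiftHom]

lemma smul_apply_eq_sum (p : ℤ[G]) (c : G → A) (x : G) :
    (p • c) x = ∑ v ∈ p.coeff.support, p.coeff v • c (x - v) := by
  conv_lhs => rw [← sum_coeff_single p, Finsupp.sum, Finset.sum_smul, Finset.sum_apply]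
  simp only [single_smul_apply]

/-- Post-composition with an additive map commutes with convolution. -/
noncomputable def postcomp (φ : A →+ B) : (G → A) →ₗ[ℤ[G]] (G → B) where
  toFun c := φ ∘ c
  map_add' _ _ := by
    ext
    simp
  map_smul' p c := by
    ext x
    simp [smul_apply_eq_sum]

lemma postcomp_apply (φ : A →+ B) (c : G → A) (x : G) : postcomp φ c x = φ (c x) := rfl

end ShiftModule

section Differences

open AddMonoidAlgebra

variable {G A : Type*} [AddCommGroup G] [AddCommGroup A]

/-- The difference polynomial `X ^ u - 1`: it annihilates exactly the `u`-periodic functions. -/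
noncomputable def diff (u : G) : ℤ[G] := single u 1 - 1

/-- The ideal of Laurent polynomials that annihilate `c`. -/
noncomputable abbrev ann (c : G → A) : Ideal ℤ[G] := Ideal.torsionOf ℤ[G] (G → A) c

lemma mem_ann {p : ℤ[G]} {c : G → A} : p ∈ ann c ↔ p • c = 0 := Ideal.mem_torsionOf_iff c p

lemma ann_le_ann_smul (p : ℤ[G]) (c : G → A) : ann c ≤ ann (p • c) := fun q hq ↦ by
  rw [mem_ann] at hq ⊢
  rw [smul_comm, hq, smul_zero]

lemma ann_postcomp_of_injective {B : Type*} [AddCommGroup B] {φ : A →+ B}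
    (hφ : Function.Injective φ) (c : G → A) : ann (postcomp φ c) = ann c := by
  ext p
  rw [mem_ann, mem_ann, ← map_smul, map_eq_zero_iff _ hφ.comp_left]

lemma diff_smul_apply (u : G) (c : G → A) (x : G) : (diff u • c) x = c (x - u) - c x := by
  rw [diff, sub_smul, one_smul, Pi.sub_apply, single_smul_apply, one_smul]

lemma diff_mem_ann {u : G} {c : G → A} : diff u ∈ ann c ↔ ∀ x, c (x + u) = c x := by
  simp only [mem_ann, funext_iff, diff_smul_apply, Pi.zero_apply, sub_eq_zero]
  exact ⟨fun h x ↦ by simpa using (h (x + u)).symm, fun h x ↦ by simpa using (h (x - u)).symm⟩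

lemma diff_zero : diff (0 : G) = 0 := sub_self _

lemma diff_add (u v : G) : diff (u + v) = single u 1 * diff v + diff u := by
  simp only [diff, mul_sub, single_mul_single, mul_one]
  abel

lemma diff_neg (u : G) : diff (-u) = -single (-u) 1 * diff u := by
  have h : (single (-u) 1 * single u 1 : ℤ[G]) = 1 := by
    rw [single_mul_single, neg_add_cancel, mul_one, one_def]
  rw [diff, diff, neg_mul, mul_sub, h, mul_one, neg_sub]

/-- The vectors `u` with `X ^ u ≡ 1` modulo the ideal `J`; for `J = ann c` these are the periods
of `c`. -/
def periods (J : Ideal ℤ[G]) : AddSubgroup G where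
  carrier := {u | diff u ∈ J}
  zero_mem' := by
    rw [Set.mem_ofPred_eq, diff_zero]
    exact J.zero_mem
  add_mem' {u v} hu hv := by
    rw [Set.mem_ofPred_eq, diff_add]
    exact J.add_mem (J.mul_mem_left _ hv) hu
  neg_mem' {u} hu := by
    rw [Set.mem_ofPred_eq, diff_neg]
    exact J.mul_mem_left _ hu

lemma mem_periods {J : Ideal ℤ[G]} {u : G} : u ∈ periods J ↔ diff u ∈ J := Iff.rfl

lemma periods_mono {I J : Ideal ℤ[G]} (h : I ≤ J) : periods I ≤ periods J := fun _ hu ↦ h hu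

end Differences

section DifferenceEquation

open AddMonoidAlgebra

variable {G A : Type*} [AddCommGroup G] [AddCommGroup A]

lemma exists_height_of_not_isOfFinAddOrder {u : G} (hu : ¬IsOfFinAddOrder u) :
    ∃ J : G → ℤ, ∀ x, J (x + u) = J x + 1 := by
  let base (x : G) : G := (QuotientAddGroup.mk x : G ⧸ AddSubgroup.zmultiples u).out
  have base_add (x : G) : base (x + u) = base x := by
    refine congrArg Quotient.out (QuotientAddGroup.eq.mpr ?_)
    simp
  have exists_height (x : G) : ∃ n : ℤ, n • u = x - base x := by
    rw [← AddSubgroup.mem_zmultiples_iff, sub_eq_neg_add, ← QuotientAddGroup.eq]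
    exact QuotientAddGroup.out_eq' _
  choose J hJ using exists_height
  refine ⟨J, fun x ↦ injective_zsmul_iff_not_isOfFinAddOrder.mpr hu ?_⟩
  dsimp only
  rw [hJ, base_add, add_zsmul, one_zsmul, hJ]
  abel

-- `σ j` is the geometric sum `-(1 + X ^ u + ⋯ + X ^ ((j - 1) u))`; the recursion
-- `σ (j + 1) = X ^ u σ j - 1` extends it to all integers `j`.
lemma exists_geomSum (u : G) : ∃ σ : ℤ → ℤ[G], ∀ j, σ (j + 1) = single u 1 * σ j - 1 := by
  have cancel {a b : G} (h : a + b = 0) (q : ℤ[G]) :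
      single a (1 : ℤ) * (single b 1 * q) = q := by
    rw [← mul_assoc, single_mul_single, h, mul_one, ← one_def, one_mul]
  let e : Equiv.Perm ℤ[G] :=
    { toFun q := single u 1 * q - 1
      invFun q := single (-u) 1 * (q + 1)
      left_inv q := by simp only [sub_add_cancel, cancel (neg_add_cancel u)]
      right_inv q := by simp only [cancel (add_neg_cancel u), add_sub_cancel_right] }
  refine ⟨fun j ↦ (e ^ j) 0, fun j ↦ ?_⟩
  simp only [add_comm j, zpow_add, zpow_one, Equiv.Perm.mul_apply]
  rfl

lemma exists_rightInverse_diff {H : AddSubgroup G} {u : G} (hu : ¬IsOfFinAddOrder (u : G ⧸ H)) :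
    ∃ S : (G → A) →+ (G → A), (∀ p, diff u • S p = p) ∧
      ∀ h ∈ H, ∀ p, diff h • S p = S (diff h • p) := by
  obtain ⟨J, hJ⟩ := exists_height_of_not_isOfFinAddOrder hu
  obtain ⟨σ, hσ⟩ := exists_geomSum u
  have J_sub (x : G) : J (x - u : G) + 1 = J x := by
    rw [← hJ, ← QuotientAddGroup.mk_add, sub_add_cancel]
  have J_sub_mem (x : G) {h : G} (hh : h ∈ H) : J (x - h : G) = J x := by
    rw [QuotientAddGroup.mk_sub, (QuotientAddGroup.eq_zero_iff h).mpr hh, sub_zero]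
  let S : (G → A) →+ (G → A) :=
    { toFun p x := (σ (J x) • p) x
      map_zero' := by
        ext x
        rw [smul_zero, Pi.zero_apply]
      map_add' p q := by
        ext x
        rw [smul_add, Pi.add_apply, Pi.add_apply] }
  have S_apply (p : G → A) (x : G) : S p x = (σ (J x) • p) x := rfl
  refine ⟨S, fun p ↦ funext fun x ↦ ?_, fun h hh p ↦ funext fun x ↦ ?_⟩
  · rw [diff_smul_apply, S_apply, S_apply, ← J_sub x, hσ, sub_smul, mul_smul, one_smul,
      Pi.sub_apply, single_smul_apply, one_smul, sub_sub_cancel]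
  · rw [diff_smul_apply, S_apply, S_apply, S_apply, J_sub_mem x hh, smul_comm, diff_smul_apply]

lemma exists_diff_smul_eq {H : AddSubgroup G} {u : G} (hu : ¬IsOfFinAddOrder (u : G ⧸ H))
    (p : G → A) :
    ∃ P : G → A, diff u • P = p ∧ ∀ h ∈ H, ∀ n : ℕ, diff h ^ n ∈ ann p → diff h ^ n ∈ ann P := by
  obtain ⟨S, diff_smul_S, S_comm⟩ := exists_rightInverse_diff (A := A) hu
  have S_comm_pow (h : G) (hh : h ∈ H) (n : ℕ) : diff h ^ n • S p = S (diff h ^ n • p) := by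
    induction n with
    | zero => simp only [pow_zero, one_smul]
    | succ n ih => rw [pow_succ', mul_smul, mul_smul, ih, S_comm h hh]
  refine ⟨S p, diff_smul_S p, fun h hh n hn ↦ ?_⟩
  rw [mem_ann] at hn ⊢
  rw [S_comm_pow h hh, hn, map_zero]

end DifferenceEquation

section Splitting

open Pointwise

variable {R M ι : Type*} [CommRing R] [AddCommGroup M] [Module R M]

lemma le_pow_smul {a : R} {Q : Submodule R M} (h : Q ≤ a • Q) (n : ℕ) : Q ≤ a ^ n • Q := by
  induction n with
  | zero => rw [pow_zero, one_smul]
  | succ n ih =>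
    calc Q ≤ a • Q := h
      _ ≤ a • a ^ n • Q := Submodule.map_mono ih
      _ = a ^ (n + 1) • Q := by rw [smul_smul, pow_succ']

lemma map_le_smul_map {N : Type*} [AddCommGroup N] [Module R N] {a : R} {Q : Submodule R M}
    (f : M →ₗ[R] N) (h : Q ≤ a • Q) : Q.map f ≤ a • Q.map f := by
  rintro _ ⟨q, hq, rfl⟩
  obtain ⟨q', hq', rfl⟩ := (Submodule.mem_smul_pointwise_iff_exists _ _ _).mp (h hq)
  rw [map_smul]
  exact Submodule.smul_mem_pointwise_smul _ _ _ (Submodule.mem_map_of_mem hq')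

lemma mem_sup_iSup_of_prod_smul_mem {a : ι → R} {C Q₀ : Submodule R M} {Q : ι → Submodule R M}
    (hQ₀ : Q₀ ≤ C) (hQ : ∀ i, Q i ≤ C) (ker_le : ∀ i, ∀ r ∈ C, a i • r = 0 → r ∈ Q i)
    (le_smul₀ : ∀ i, Q₀ ≤ a i • Q₀) (le_smul : ∀ i j, i ≠ j → Q j ≤ a i • Q j)
    (s : Finset ι) {r : M} (hr : r ∈ C) (hs : (∏ i ∈ s, a i) • r ∈ Q₀) :
    r ∈ Q₀ ⊔ ⨆ i ∈ s, Q i := by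
  classical
  induction s using Finset.induction_on generalizing r with
  | empty => simpa using hs
  | insert i s hi ih =>
    have div : Q₀ ⊔ ⨆ j ∈ s, Q j ≤ a i • (Q₀ ⊔ ⨆ j ∈ s, Q j) := by
      simp only [Submodule.smul_sup', Submodule.smul_iSup']
      exact sup_le_sup (le_smul₀ i)
        (iSup₂_mono fun j hj ↦ le_smul i j (ne_of_mem_of_not_mem hj hi).symm)
    have smul_mem : a i • r ∈ Q₀ ⊔ ⨆ j ∈ s, Q j :=
      ih (C.smul_mem _ hr) (by rwa [smul_smul, mul_comm, ← Finset.prod_insert hi])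
    obtain ⟨r', hr', smul_eq⟩ := Submodule.mem_smul_pointwise_iff_exists _ _ _ |>.mp (div smul_mem)
    have hr'C : r' ∈ C := sup_le hQ₀ (iSup₂_le fun j _ ↦ hQ j) hr'
    have hker : r - r' ∈ Q i :=
      ker_le i _ (C.sub_mem hr hr'C) (by rw [smul_sub, smul_eq, sub_self])
    rw [Finset.iSup_insert, sup_left_comm, ← sub_add_cancel r r']
    exact Submodule.add_mem_sup hker hr'

end Splitting

section PeriodSpan

open AddMonoidAlgebra

variable {d : ℕ}

lemma intVecQ_injective : Function.Injective (intVecQ (d := d)) := fun _ _ h ↦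
  funext fun i ↦ Int.cast_injective (congrFun h i)

lemma intVecQ_zero : intVecQ (0 : Fin d → ℤ) = 0 := by
  ext
  simp [intVecQ]

lemma intVecQ_add (u v : Fin d → ℤ) : intVecQ (u + v) = intVecQ u + intVecQ v := by
  ext
  simp [intVecQ]

lemma intVecQ_neg (u : Fin d → ℤ) : intVecQ (-u) = -intVecQ u := by
  ext
  simp [intVecQ]

lemma intVecQ_nsmul (n : ℕ) (u : Fin d → ℤ) : intVecQ (n • u) = n • intVecQ u := by
  ext
  simp [intVecQ]

/-- The lattice vectors lying in a rational subspace. -/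
def latticePoints (W : Submodule ℚ (Fin d → ℚ)) : AddSubgroup (Fin d → ℤ) where
  carrier := {u | intVecQ u ∈ W}
  zero_mem' := by
    rw [Set.mem_ofPred_eq, intVecQ_zero]
    exact W.zero_mem
  add_mem' {u v} hu hv := by
    rw [Set.mem_ofPred_eq, intVecQ_add]
    exact W.add_mem hu hv
  neg_mem' {u} hu := by
    rw [Set.mem_ofPred_eq, intVecQ_neg]
    exact W.neg_mem hu

lemma mem_latticePoints {W : Submodule ℚ (Fin d → ℚ)} {u : Fin d → ℤ} :
    u ∈ latticePoints W ↔ intVecQ u ∈ W := Iff.rfl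

lemma nsmul_mem_iff {W : Submodule ℚ (Fin d → ℚ)} {n : ℕ} (hn : n ≠ 0) {q : Fin d → ℚ} :
    n • q ∈ W ↔ q ∈ W := by
  rw [← Nat.cast_smul_eq_nsmul ℚ, W.smul_mem_iff (Nat.cast_ne_zero.mpr hn)]

lemma not_isOfFinAddOrder_mk {W : Submodule ℚ (Fin d → ℚ)} {u : Fin d → ℤ} (hu : intVecQ u ∉ W) :
    ¬IsOfFinAddOrder (u : (Fin d → ℤ) ⧸ latticePoints W) := by
  rw [isOfFinAddOrder_iff_nsmul_eq_zero]
  rintro ⟨n, hn, h⟩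
  rw [← QuotientAddGroup.mk_nsmul, QuotientAddGroup.eq_zero_iff, mem_latticePoints,
    intVecQ_nsmul, nsmul_mem_iff hn.ne'] at h
  exact hu h

/-- The rational subspace spanned by the periods of an ideal. -/
def periodSpan (J : Ideal ℤ[Fin d → ℤ]) : Submodule ℚ (Fin d → ℚ) :=
  Submodule.span ℚ (intVecQ '' (periods J : Set (Fin d → ℤ)))

lemma periodSpan_mono {I J : Ideal ℤ[Fin d → ℤ]} (h : I ≤ J) : periodSpan I ≤ periodSpan J :=
  Submodule.span_mono (Set.image_mono (periods_mono h))

lemma mem_periodSpan {J : Ideal ℤ[Fin d → ℤ]} {q : Fin d → ℚ} :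
    q ∈ periodSpan J ↔ ∃ n : ℕ, n ≠ 0 ∧ ∃ u ∈ periods J, n • q = intVecQ u := by
  constructor
  · intro hq
    induction hq using Submodule.span_induction with
    | mem q hq =>
      obtain ⟨u, hu, rfl⟩ := hq
      exact ⟨1, one_ne_zero, u, hu, one_nsmul _⟩
    | zero => exact ⟨1, one_ne_zero, 0, zero_mem _, by rw [intVecQ_zero, nsmul_zero]⟩
    | add q q' _ _ hq hq' =>
      obtain ⟨n, hn, u, hu, h⟩ := hq
      obtain ⟨n', hn', u', hu', h'⟩ := hq'
      refine ⟨n * n', mul_ne_zero hn hn', n' • u + n • u',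
        add_mem (nsmul_mem hu n') (nsmul_mem hu' n), ?_⟩
      rw [intVecQ_add, intVecQ_nsmul, intVecQ_nsmul, ← h, ← h', smul_add, smul_smul, smul_smul,
        mul_comm n]
    | smul a q _ hq =>
      obtain ⟨n, hn, u, hu, h⟩ := hq
      refine ⟨a.den * n, mul_ne_zero a.den_ne_zero hn, a.num • u, zsmul_mem hu _, ?_⟩
      have hu' : intVecQ (a.num • u) = (a.num : ℚ) • intVecQ u := by
        ext
        simp [intVecQ]
      simp only [hu', ← h, ← Rat.mul_den_eq_num, ← Nat.cast_smul_eq_nsmul ℚ, smul_smul]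
      congr 1
      push_cast
      ring
  · rintro ⟨n, hn, u, hu, h⟩
    rw [← nsmul_mem_iff hn, h]
    exact Submodule.subset_span ⟨u, hu, rfl⟩

lemma intVecQ_mem_periodSpan {J : Ideal ℤ[Fin d → ℤ]} {u : Fin d → ℤ} :
    intVecQ u ∈ periodSpan J ↔ ∃ n : ℕ, n ≠ 0 ∧ n • u ∈ periods J := by
  simp only [mem_periodSpan, ← intVecQ_nsmul, intVecQ_injective.eq_iff, exists_eq_right']

lemma periodSpan_inf (I J : Ideal ℤ[Fin d → ℤ]) :
    periodSpan (I ⊓ J) = periodSpan I ⊓ periodSpan J := by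
  refine le_antisymm (le_inf (periodSpan_mono inf_le_left) (periodSpan_mono inf_le_right)) ?_
  rintro q ⟨hI, hJ⟩
  obtain ⟨n, hn, u, hu, h⟩ := mem_periodSpan.mp hI
  rw [SetLike.mem_coe, ← nsmul_mem_iff hn, h, intVecQ_mem_periodSpan] at hJ
  obtain ⟨m, hm, hmu⟩ := hJ
  refine mem_periodSpan.mpr ⟨m * n, mul_ne_zero hm hn, m • u, ⟨nsmul_mem hu m, hmu⟩, ?_⟩
  rw [intVecQ_nsmul, ← h, mul_smul]

lemma exists_mem_periods_of_not_le {J : Ideal ℤ[Fin d → ℤ]} {W W₀ : Submodule ℚ (Fin d → ℚ)}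
    (hW : W ≤ periodSpan J) (hW₀ : ¬W ≤ W₀) :
    ∃ u ∈ periods J, intVecQ u ∈ W ∧ intVecQ u ∉ W₀ := by
  obtain ⟨q, hqW, hqW₀⟩ := SetLike.not_le_iff_exists.mp hW₀
  obtain ⟨n, hn, u, hu, h⟩ := mem_periodSpan.mp (hW hqW)
  exact ⟨u, hu, h ▸ (nsmul_mem_iff hn).mpr hqW, h ▸ (nsmul_mem_iff hn).not.mpr hqW₀⟩

lemma le_periodSpan_of_forall_mem_periods {I J : Ideal ℤ[Fin d → ℤ]}
    {W : Submodule ℚ (Fin d → ℚ)} (hW : W ≤ periodSpan I)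
    (h : ∀ u ∈ periods I, intVecQ u ∈ W → u ∈ periods J) : W ≤ periodSpan J := by
  intro q hq
  obtain ⟨n, hn, u, hu, hqu⟩ := mem_periodSpan.mp (hW hq)
  exact mem_periodSpan.mpr ⟨n, hn, u, h u hu (hqu ▸ (nsmul_mem_iff hn).mpr hq), hqu⟩

end PeriodSpan

section PolyPeriodic

open AddMonoidAlgebra Pointwise

variable {d : ℕ} {A : Type*} [AddCommGroup A] {W₀ W : Submodule ℚ (Fin d → ℚ)}

lemma periodSpan_top : periodSpan (⊤ : Ideal ℤ[Fin d → ℤ]) = ⊤ := by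
  rw [eq_top_iff, ← (Pi.basisFun ℚ (Fin d)).span_eq, periodSpan]
  refine Submodule.span_mono (Set.range_subset_iff.mpr fun i ↦ ⟨Pi.single i 1, trivial, ?_⟩)
  ext j
  simp [intVecQ, Pi.single_apply]

/-- The functions that are periodic along `W₀` and polynomial along `W`: every lattice vector of
`W₀` has a nonzero multiple `v` such that `X ^ v - 1` annihilates the function, and every lattice
vector of `W` has a nonzero multiple `v` such that a power of `X ^ v - 1` does. -/
def polyPeriodic (A : Type*) [AddCommGroup A] (W₀ W : Submodule ℚ (Fin d → ℚ)) :
    Submodule ℤ[Fin d → ℤ] ((Fin d → ℤ) → A) where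
  carrier := {r | W₀ ≤ periodSpan (ann r) ∧ W ≤ periodSpan (ann r).radical}
  zero_mem' := by
    have ann_zero : ann (0 : (Fin d → ℤ) → A) = ⊤ := Ideal.torsionOf_zero _ _
    simp only [Set.mem_ofPred_eq, ann_zero, Ideal.radical_top, periodSpan_top, le_top, and_self]
  add_mem' {r s} hr hs := by
    have ann_inf_le : ann r ⊓ ann s ≤ ann (r + s) := fun p ⟨hpr, hps⟩ ↦ by
      rw [mem_ann, smul_add, mem_ann.mp hpr, mem_ann.mp hps, add_zero]
    refine ⟨le_trans ?_ (periodSpan_mono ann_inf_le),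
      le_trans ?_ (periodSpan_mono (Ideal.radical_mono ann_inf_le))⟩
    · exact periodSpan_inf _ _ ▸ le_inf hr.1 hs.1
    · exact Ideal.radical_inf (ann r) (ann s) ▸ periodSpan_inf _ _ ▸ le_inf hr.2 hs.2
  smul_mem' p r hr :=
    ⟨hr.1.trans (periodSpan_mono (ann_le_ann_smul p r)),
      hr.2.trans (periodSpan_mono (Ideal.radical_mono (ann_le_ann_smul p r)))⟩

lemma mem_polyPeriodic {r : (Fin d → ℤ) → A} :
    r ∈ polyPeriodic A W₀ W ↔ W₀ ≤ periodSpan (ann r) ∧ W ≤ periodSpan (ann r).radical := Iff.rfl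

lemma polyPeriodic_anti {W₀' W' : Submodule ℚ (Fin d → ℚ)} (h₀ : W₀' ≤ W₀) (h : W' ≤ W) :
    polyPeriodic A W₀ W ≤ polyPeriodic A W₀' W' :=
  fun _ hr ↦ ⟨h₀.trans hr.1, h.trans hr.2⟩

lemma postcomp_mem_polyPeriodic_iff {B : Type*} [AddCommGroup B] {φ : A →+ B}
    (hφ : Function.Injective φ) {r : (Fin d → ℤ) → A} :
    postcomp φ r ∈ polyPeriodic B W₀ W ↔ r ∈ polyPeriodic A W₀ W := by
  rw [mem_polyPeriodic, mem_polyPeriodic, ann_postcomp_of_injective hφ]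

lemma intVecQ_mem_periodSpan_of_mem {J : Ideal ℤ[Fin d → ℤ]} {u : Fin d → ℤ} (hu : diff u ∈ J) :
    intVecQ u ∈ periodSpan J :=
  Submodule.subset_span ⟨u, hu, rfl⟩

lemma mem_polyPeriodic_of_diff_smul_eq_zero {r : (Fin d → ℤ) → A} (hr : r ∈ polyPeriodic A W₀ W)
    {u : Fin d → ℤ} (h : diff u • r = 0) :
    r ∈ polyPeriodic A (W₀ ⊔ Submodule.span ℚ {intVecQ u}) W :=
  ⟨sup_le hr.1 <| (Submodule.span_singleton_le_iff_mem _ _).mpr <|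
    intVecQ_mem_periodSpan_of_mem (mem_ann.mpr h), hr.2⟩

lemma mem_polyPeriodic_of_diff_pow_smul_eq_zero {r : (Fin d → ℤ) → A}
    (hr : r ∈ polyPeriodic A W₀ W) {u : Fin d → ℤ} {n : ℕ} (h : diff u ^ n • r = 0) :
    r ∈ polyPeriodic A W₀ (W ⊔ Submodule.span ℚ {intVecQ u}) :=
  ⟨hr.1, sup_le hr.2 <| (Submodule.span_singleton_le_iff_mem _ _).mpr <|
    intVecQ_mem_periodSpan_of_mem ⟨n, mem_ann.mpr h⟩⟩

lemma exists_diff_smul_eq_inf {W₁ : Submodule ℚ (Fin d → ℚ)} (hW : W₀ ≤ W₁) {u : Fin d → ℤ}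
    (hu : intVecQ u ∉ W₁) {p : (Fin d → ℤ) → A} (hp : p ∈ polyPeriodic A W₀ W) :
    ∃ P ∈ polyPeriodic A W₀ (W ⊓ W₁), diff u • P = p := by
  obtain ⟨P, hP, ann_le⟩ := exists_diff_smul_eq (not_isOfFinAddOrder_mk hu) p
  refine ⟨P, ⟨?_, ?_⟩, hP⟩
  · refine le_periodSpan_of_forall_mem_periods hp.1 fun h hh hhW ↦ ?_
    rw [mem_periods, ← pow_one (diff h)] at hh ⊢
    exact ann_le h (hW hhW) 1 hh
  · refine le_periodSpan_of_forall_mem_periods (inf_le_left.trans hp.2) fun h ⟨n, hn⟩ hhW ↦ ?_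
    exact ⟨n, ann_le h hhW.2 n hn⟩

lemma mem_periodSpan_radical_of_diff_smul {u : Fin d → ℤ} {p P : (Fin d → ℤ) → A}
    (hu : intVecQ u ∈ periodSpan (ann p).radical) (hP : diff u • P = p) :
    intVecQ u ∈ periodSpan (ann P).radical := by
  obtain ⟨m, hm, n, hn⟩ := intVecQ_mem_periodSpan.mp hu
  obtain ⟨q, hq⟩ : diff u ∣ diff (m • u) := by
    rw [← Ideal.mem_span_singleton, ← mem_periods]
    exact nsmul_mem (mem_periods.mpr (Ideal.mem_span_singleton_self (diff u))) m
  have smul_P : diff (m • u) • P = q • p := by rw [hq, mul_comm, mul_smul, hP]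
  refine intVecQ_mem_periodSpan.mpr ⟨m, hm, n + 1, mem_ann.mpr ?_⟩
  rw [pow_succ, mul_smul, smul_P, smul_comm, mem_ann.mp hn, smul_zero]

lemma polyPeriodic_le_diff_smul (hW : W₀ ≤ W) {u : Fin d → ℤ} (hu : intVecQ u ∉ W₀) :
    polyPeriodic A W₀ W ≤ diff u • polyPeriodic A W₀ W := by
  intro p hp
  rw [Submodule.mem_smul_pointwise_iff_exists]
  by_cases huW : intVecQ u ∈ W
  · obtain ⟨W₁, hW₁, compl⟩ :=
      (Submodule.disjoint_span_singleton_of_notMem hu).exists_isCompl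
    have hu₁ : intVecQ u ∉ W₁ := fun h ↦
      hu (Submodule.disjoint_span_singleton.mp compl.disjoint h ▸ W₀.zero_mem)
    obtain ⟨P, hP, hPp⟩ := exists_diff_smul_eq_inf hW₁ hu₁ hp
    have W_le : W ≤ W ⊓ W₁ ⊔ Submodule.span ℚ {intVecQ u} := by
      rw [sup_comm, inf_comm,
        ← sup_inf_assoc_of_le _ ((Submodule.span_singleton_le_iff_mem _ _).mpr huW), sup_comm,
        compl.sup_eq_top, top_inf_eq]
    refine ⟨P, ⟨hP.1, W_le.trans (sup_le hP.2 ?_)⟩, hPp⟩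
    rw [Submodule.span_singleton_le_iff_mem]
    exact mem_periodSpan_radical_of_diff_smul (hp.2 huW) hPp
  · obtain ⟨P, hP, hPp⟩ := exists_diff_smul_eq_inf hW huW hp
    exact ⟨P, inf_idem W ▸ hP, hPp⟩

end PolyPeriodic

section SumsOfPeriodic

open AddMonoidAlgebra Module

variable {d k : ℕ} {A : Type*} [AddCommGroup A] {W₀ W : Submodule ℚ (Fin d → ℚ)}

/-- The finite sums of functions having `k` linearly independent periods. -/
noncomputable def periodicSums (A : Type*) [AddCommGroup A] (d k : ℕ) :
    Submodule ℤ[Fin d → ℤ] ((Fin d → ℤ) → A) :=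
  Submodule.span _ {s | k ≤ finrank ℚ (periodSpan (ann s))}

lemma mem_periodicSums_of_mem_polyPeriodic {r : (Fin d → ℤ) → A} (hr : r ∈ polyPeriodic A W₀ W)
    (hk : k ≤ finrank ℚ W₀) : r ∈ periodicSums A d k :=
  Submodule.subset_span (hk.trans (Submodule.finrank_mono hr.1))

lemma exists_prod_diff_mem {G : Type*} [AddCommGroup G] {J : Ideal ℤ[G]} {a b : G}
    (ha : a ∈ periods J.radical) (hb : b ∈ periods J.radical) :
    ∃ N : ℕ, ∏ i ∈ Finset.range N, diff (a + i • b) ∈ J := by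
  let I : Ideal ℤ[G] := Ideal.span {diff a, diff b}
  have I_le : I ≤ J.radical := by
    rw [Ideal.span_le, Set.insert_subset_iff, Set.singleton_subset_iff]
    exact ⟨ha, hb⟩
  have I_fg : I.FG := Submodule.fg_span (Set.toFinite _)
  obtain ⟨N, hN⟩ := Ideal.exists_pow_le_of_le_radical_of_fg I_le I_fg
  refine ⟨N, hN ?_⟩
  have diff_mem (i : ℕ) : diff (a + i • b) ∈ I :=
    add_mem (S := AddSubgroup G) (s := periods I) (Ideal.subset_span (by simp))
      (nsmul_mem (mem_periods.mpr (Ideal.subset_span (by simp))) i)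
  have prod_mem := Ideal.prod_mem_prod (s := Finset.range N) fun i _ ↦ diff_mem i
  rwa [Finset.prod_const, Finset.card_range] at prod_mem

lemma add_nsmul_notMem_sup_span {E : Type*} [AddCommGroup E] [Module ℚ E] {U : Submodule ℚ E}
    {α β : E} (hα : α ∉ U) (hβ : β ∉ U ⊔ Submodule.span ℚ {α}) {i j : ℕ} (hij : i ≠ j) :
    α + i • β ∉ U ⊔ Submodule.span ℚ {α + j • β} := by
  intro h
  obtain ⟨x, hx, y, hy, hxy⟩ := Submodule.mem_sup.mp h
  obtain ⟨t, rfl⟩ := Submodule.mem_span_singleton.mp hy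
  have hx' : x = (1 - t) • α + (i - t * j : ℚ) • β := by
    rw [← eq_sub_iff_add_eq] at hxy
    rw [hxy, ← Nat.cast_smul_eq_nsmul ℚ, ← Nat.cast_smul_eq_nsmul ℚ]
    module
  have hi : (i - t * j : ℚ) = 0 := by
    by_contra hne
    refine hβ ((Submodule.smul_mem_iff _ hne).mp ?_)
    rw [← sub_eq_iff_eq_add'.mpr hx']
    exact Submodule.sub_mem_sup hx
      (Submodule.smul_mem _ _ (Submodule.mem_span_singleton_self α))
  have ht : t = 1 := by
    by_contra hne
    refine hα ((Submodule.smul_mem_iff _ (sub_ne_zero.mpr (Ne.symm hne))).mp ?_)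
    rw [hi, zero_smul, add_zero] at hx'
    exact hx' ▸ hx
  rw [ht, one_mul, sub_eq_zero, Nat.cast_inj] at hi
  exact hij hi

-- In a plane spanned modulo `W₀` by directions `a`, `b` along which `r` is polynomial, the product
-- of `X ^ (a + i b) - 1` over sufficiently many `i` annihilates `r`, and the directions `a + i b`
-- are pairwise distinct.
lemma mem_iSup_polyPeriodic (hW : W₀ ≤ W) (hrank : finrank ℚ W₀ + 1 < finrank ℚ W)
    {r : (Fin d → ℤ) → A} (hr : r ∈ polyPeriodic A W₀ W) :
    r ∈ ⨆ W₁, ⨆ _ : W₁ ≤ W ∧ finrank ℚ W₁ = finrank ℚ W₀ + 1, polyPeriodic A W₁ W := by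
  have not_le {U : Submodule ℚ (Fin d → ℚ)} (hU : finrank ℚ U < finrank ℚ W) : ¬W ≤ U :=
    fun h ↦ (Submodule.finrank_mono h).not_gt hU
  obtain ⟨a, ha, haW, ha₀⟩ := exists_mem_periods_of_not_le hr.2 (not_le (U := W₀) (by lia))
  have finrank_sup {q : Fin d → ℚ} (hq : q ∉ W₀) :
      finrank ℚ ↥(W₀ ⊔ Submodule.span ℚ {q}) = finrank ℚ W₀ + 1 :=
    Submodule.finrank_sup_span_singleton hq
  obtain ⟨b, hb, hbW, hb₀⟩ :=
    exists_mem_periods_of_not_le hr.2 (not_le ((finrank_sup ha₀).trans_lt hrank))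
  obtain ⟨N, hN⟩ := exists_prod_diff_mem ha hb
  have intVecQ_w (i : ℕ) : intVecQ (a + i • b) = intVecQ a + i • intVecQ b := by
    rw [intVecQ_add, intVecQ_nsmul]
  have notMem {i j : ℕ} (hij : i ≠ j) :
      intVecQ (a + i • b) ∉ W₀ ⊔ Submodule.span ℚ {intVecQ (a + j • b)} := by
    rw [intVecQ_w, intVecQ_w]
    exact add_nsmul_notMem_sup_span ha₀ hb₀ hij
  have notMem₀ (i : ℕ) : intVecQ (a + i • b) ∉ W₀ :=
    fun h ↦ notMem i.succ_ne_self.symm (le_sup_left (a := W₀) h)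
  have le_W (i : ℕ) : W₀ ⊔ Submodule.span ℚ {intVecQ (a + i • b)} ≤ W := by
    rw [sup_le_iff, Submodule.span_singleton_le_iff_mem, intVecQ_w]
    exact ⟨hW, W.add_mem haW (nsmul_mem hbW i)⟩
  have mem_sup := mem_sup_iSup_of_prod_smul_mem (a := fun i : ℕ ↦ diff (a + i • b)) (Q₀ := ⊥)
    (Q := fun i ↦ polyPeriodic A (W₀ ⊔ Submodule.span ℚ {intVecQ (a + i • b)}) W)
    bot_le (fun i ↦ polyPeriodic_anti le_sup_left le_rfl)
    (fun i r hr h ↦ mem_polyPeriodic_of_diff_smul_eq_zero hr h) (fun i ↦ bot_le)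
    (fun i j hij ↦ polyPeriodic_le_diff_smul (le_W j) (notMem hij)) (Finset.range N) hr
    (mem_ann.mp hN)
  rw [bot_sup_eq] at mem_sup
  refine SetLike.le_def.mp (iSup₂_le fun i _ ↦ ?_) mem_sup
  exact le_iSup₂_of_le _ ⟨le_W i, finrank_sup (notMem₀ i)⟩ le_rfl

lemma polyPeriodic_le_periodicSums (hW : W₀ ≤ W) (hk : k < finrank ℚ W) :
    polyPeriodic A W₀ W ≤ periodicSums A d k := by
  intro r hr
  induction h : k - finrank ℚ W₀ generalizing W₀ r with
  | zero => exact mem_periodicSums_of_mem_polyPeriodic hr (Nat.sub_eq_zero_iff_le.mp h)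
  | succ n ih =>
    refine SetLike.le_def.mp (iSup₂_le fun W₁ hW₁ ↦ ?_) (mem_iSup_polyPeriodic hW (by lia) hr)
    exact fun s hs ↦ ih hW₁.1 hs (by lia)

lemma exists_sum_eq_of_mem_periodicSums {c : (Fin d → ℤ) → ℤ} (hc : c ∈ periodicSums ℤ d k) :
    ∃ (m : ℕ) (cs : Fin m → ((Fin d → ℤ) → ℤ)), (∀ i, KPeriodic k (cs i)) ∧ c = ∑ i, cs i := by
  obtain ⟨m, p, s, rfl⟩ := Submodule.mem_span_set'.mp hc
  refine ⟨m, fun i ↦ p i • s i, fun i ↦ ?_, rfl⟩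
  have hk : k ≤ finrank ℚ (periodSpan (ann (p i • (s i : (Fin d → ℤ) → ℤ)))) :=
    (s i).2.trans (Submodule.finrank_mono (periodSpan_mono (ann_le_ann_smul _ _)))
  obtain ⟨v, hv, -, hli⟩ := Submodule.exists_fun_fin_finrank_span_eq ℚ
    (intVecQ '' (periods (ann (p i • (s i : (Fin d → ℤ) → ℤ))) : Set (Fin d → ℤ)))
  choose u hu huv using hv
  refine ⟨fun j ↦ u (j.castLE hk), ?_, fun j ↦ diff_mem_ann.mp (hu _)⟩
  simp only [huv]
  exact hli.comp _ (Fin.castLE_injective hk)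

end SumsOfPeriodic

section IntegerDecomposition

open AddMonoidAlgebra Module Pointwise

variable {d k n : ℕ} {W : Submodule ℚ (Fin d → ℚ)}

/-- The inclusion of the integer functions into the real ones. -/
noncomputable abbrev toReal (d : ℕ) :
    ((Fin d → ℤ) → ℤ) →ₗ[ℤ[Fin d → ℤ]] ((Fin d → ℤ) → ℝ) :=
  postcomp (Int.castAddHom ℝ)

lemma toReal_injective : Function.Injective (toReal d) := Int.cast_injective.comp_left

open scoped Classical in
/-- The directions of periodicity demanded of a function polynomial along `W`: all of `W` if
`dim W ≤ k`, and none otherwise, where `polyPeriodic_le_periodicSums` finds periods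
anyway. -/
noncomputable def core (k : ℕ) (W : Submodule ℚ (Fin d → ℚ)) : Submodule ℚ (Fin d → ℚ) :=
  if finrank ℚ W ≤ k then W else ⊥

lemma core_le (k : ℕ) (W : Submodule ℚ (Fin d → ℚ)) : core k W ≤ W := by
  unfold core
  split_ifs
  · exact le_rfl
  · exact bot_le

lemma core_of_le (h : finrank ℚ W ≤ k) : core k W = W := if_pos h

lemma core_of_lt (h : k < finrank ℚ W) : core k W = ⊥ := if_neg h.not_ge

/-- The functions polynomial along `W` and periodic along `core k W`. -/
noncomputable abbrev layer (A : Type*) [AddCommGroup A] (k : ℕ) (W : Submodule ℚ (Fin d → ℚ)) :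
    Submodule ℤ[Fin d → ℤ] ((Fin d → ℤ) → A) :=
  polyPeriodic A (core k W) W

/-- The sums of real functions in the layers of the subspaces of dimension at least `n`. -/
noncomputable def layerSums (d k n : ℕ) : Submodule ℤ[Fin d → ℤ] ((Fin d → ℤ) → ℝ) :=
  ⨆ W : {W : Submodule ℚ (Fin d → ℚ) // n ≤ finrank ℚ W}, layer ℝ k (W : Submodule ℚ (Fin d → ℚ))

lemma layer_le_layerSums (h : n ≤ finrank ℚ W) : layer ℝ k W ≤ layerSums d k n :=
  le_iSup_of_le ⟨W, h⟩ le_rfl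

lemma layerSums_eq_bot (h : d < n) : layerSums d k n = ⊥ := by
  refine iSup_eq_bot.mpr fun ⟨W, hW⟩ ↦ absurd (Submodule.finrank_le W) ?_
  rw [finrank_fin_fun]
  exact (h.trans_le hW).not_ge

lemma layer_le_periodicSums {A : Type*} [AddCommGroup A] (hW : k ≤ finrank ℚ W) :
    layer A k W ≤ periodicSums A d k := by
  rcases hW.eq_or_lt with h | h
  · rw [layer, core_of_le h.ge]
    exact fun r hr ↦ mem_periodicSums_of_mem_polyPeriodic hr h.le
  · exact polyPeriodic_le_periodicSums (core_le k W) h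

lemma map_toReal_layer : (layer ℤ k W).map (toReal d) = layer ℝ k W ⊓ (toReal d).range := by
  ext r
  constructor
  · rintro ⟨z, hz, rfl⟩
    exact ⟨(postcomp_mem_polyPeriodic_iff Int.cast_injective).mpr hz, z, rfl⟩
  · rintro ⟨hr, z, rfl⟩
    exact ⟨z, (postcomp_mem_polyPeriodic_iff Int.cast_injective).mp hr, rfl⟩

lemma mem_sup_layerSums_of_prod_smul_mem (hn : k ≤ n) (hW : finrank ℚ W = n) {ι : Type*}
    {u : ι → Fin d → ℤ} (hu : ∀ i, intVecQ (u i) ∉ W) (m : ι → ℕ) (s : Finset ι)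
    {r : (Fin d → ℤ) → ℝ} (hr : r ∈ layer ℝ k W)
    (hs : (∏ i ∈ s, diff (u i) ^ m i) • r ∈ (toReal d).range) :
    r ∈ (periodicSums ℤ d k).map (toReal d) ⊔ layerSums d k (n + 1) := by
  have notMem_core (i : ι) : intVecQ (u i) ∉ core k W := fun h ↦ hu i (core_le k W h)
  have finrank_sup (i : ι) :
      finrank ℚ ↥(W ⊔ Submodule.span ℚ {intVecQ (u i)}) = n + 1 :=
    hW ▸ Submodule.finrank_sup_span_singleton (hu i)
  have mem_sup := mem_sup_iSup_of_prod_smul_mem (a := fun i ↦ diff (u i) ^ m i)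
    (C := layer ℝ k W) (Q₀ := (layer ℤ k W).map (toReal d))
    (Q := fun i ↦ polyPeriodic ℝ (core k W) (W ⊔ Submodule.span ℚ {intVecQ (u i)}))
    (map_toReal_layer.trans_le inf_le_left)
    (fun i ↦ polyPeriodic_anti le_rfl le_sup_left)
    (fun i r hr h ↦ mem_polyPeriodic_of_diff_pow_smul_eq_zero hr h)
    (fun i ↦ le_pow_smul
      (map_le_smul_map _ (polyPeriodic_le_diff_smul (core_le k W) (notMem_core i))) _)
    (fun i j _ ↦ le_pow_smul (polyPeriodic_le_diff_smul ((core_le k W).trans le_sup_left)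
      (notMem_core i)) _) s hr
    (map_toReal_layer.ge ⟨Submodule.smul_mem _ _ hr, hs⟩)
  have layer_le : layer ℤ k W ≤ periodicSums ℤ d k := layer_le_periodicSums (hn.trans_eq hW.symm)
  refine SetLike.le_def.mp
    (sup_le_sup (Submodule.map_mono layer_le) (iSup₂_le fun i _ ↦ ?_)) mem_sup
  calc polyPeriodic ℝ (core k W) (W ⊔ Submodule.span ℚ {intVecQ (u i)})
      ≤ layer ℝ k (W ⊔ Submodule.span ℚ {intVecQ (u i)}) :=
        polyPeriodic_anti ((core_of_lt (by rw [finrank_sup]; lia)).trans_le bot_le) le_rfl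
    _ ≤ layerSums d k (n + 1) := layer_le_layerSums (finrank_sup i).ge

lemma exists_diff_pow_smul_eq_zero {A : Type*} [AddCommGroup A] {W₀ W' : Submodule ℚ (Fin d → ℚ)}
    (h : ¬W' ≤ W) {r : (Fin d → ℤ) → A} (hr : r ∈ polyPeriodic A W₀ W') :
    ∃ (u : Fin d → ℤ) (m : ℕ), intVecQ u ∉ W ∧ diff u ^ m • r = 0 := by
  obtain ⟨u, ⟨m, hm⟩, -, hu⟩ := exists_mem_periods_of_not_le hr.2 h
  exact ⟨u, m, hu, mem_ann.mp hm⟩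

lemma layerSums_inf_range_le (hn : k ≤ n) :
    layerSums d k n ⊓ (toReal d).range ≤
      (periodicSums ℤ d k).map (toReal d) ⊔ layerSums d k (n + 1) := by
  classical
  rintro c ⟨hc, hcZ⟩
  obtain ⟨r, hr, rfl⟩ := (Submodule.mem_iSup_iff_exists_finsupp _ _).mp hc
  refine Submodule.sum_mem _ fun W hW ↦ ?_
  rcases W.2.eq_or_lt with hrank | hrank
  swap
  · exact Submodule.mem_sup_right (layer_le_layerSums hrank (hr W))
  have not_le (W' : r.support.erase W) : ¬W'.1.1 ≤ W.1 := fun h ↦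
    (Finset.mem_erase.mp W'.2).1 <| Subtype.ext <|
      Submodule.eq_of_le_of_finrank_le h (hrank.ge.trans W'.1.2)
  choose u m hu hum using fun W' : r.support.erase W ↦
    exists_diff_pow_smul_eq_zero (not_le W') (hr W')
  refine mem_sup_layerSums_of_prod_smul_mem hn hrank.symm hu m Finset.univ (hr W) ?_
  have smul_sum : (∏ i, diff (u i) ^ m i) • r W = (∏ i, diff (u i) ^ m i) • r.sum fun _ x ↦ x := by
    rw [Finsupp.sum, Finset.smul_sum, Finset.sum_eq_single_of_mem W hW]
    intro W' hW' hne
    have hdvd := Finset.dvd_prod_of_mem (fun i ↦ diff (u i) ^ m i)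
      (Finset.mem_univ (⟨W', Finset.mem_erase.mpr ⟨hne, hW'⟩⟩ : r.support.erase W))
    obtain ⟨q, hq⟩ := hdvd
    rw [hq, mul_comm, mul_smul, hum, smul_zero]
  exact smul_sum ▸ Submodule.smul_mem _ _ hcZ

lemma mem_periodicSums_of_toReal_mem_layerSums (hn : k ≤ n) {c : (Fin d → ℤ) → ℤ}
    (hc : toReal d c ∈ layerSums d k n) : c ∈ periodicSums ℤ d k := by
  induction h : d + 1 - n generalizing n c with
  | zero =>
    rw [layerSums_eq_bot (by lia), Submodule.mem_bot, map_eq_zero_iff _ toReal_injective] at hc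
    exact hc ▸ zero_mem _
  | succ j ih =>
    obtain ⟨_, ⟨S, hS, rfl⟩, x, hx, hSx⟩ :=
      Submodule.mem_sup.mp (layerSums_inf_range_le hn ⟨hc, c, rfl⟩)
    have hsub : c - S ∈ periodicSums ℤ d k :=
      ih (n := n + 1) (by lia) (by rwa [map_sub, ← hSx, add_sub_cancel_left]) (by lia)
    exact sub_add_cancel c S ▸ add_mem hsub hS

end IntegerDecomposition

section Means

open AddMonoidAlgebra Filter Topology

variable {G : Type*} [AddCommGroup G] {r : G → ℝ} {B : ℝ}

/-- The average of the first `N` translates of `c` along `u`. -/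
noncomputable def average (u : G) (N : ℕ) (c : G → ℝ) : G → ℝ :=
  postcomp (AddMonoidHom.mulLeft (N : ℝ)⁻¹) ((∑ i ∈ Finset.range N, (single u 1 : ℤ[G]) ^ i) • c)

lemma smul_average (p : ℤ[G]) (u : G) (N : ℕ) (c : G → ℝ) :
    p • average u N c = average u N (p • c) := by
  rw [average, average, ← map_smul, smul_comm]

lemma single_pow_smul_apply (u : G) (i : ℕ) (c : G → ℝ) (x : G) :
    ((single u 1 : ℤ[G]) ^ i • c) x = c (x - i • u) := by
  rw [AddMonoidAlgebra.single_pow, one_pow, single_smul_apply, one_smul]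

lemma average_apply (u : G) (N : ℕ) (c : G → ℝ) (x : G) :
    average u N c x = (N : ℝ)⁻¹ * ∑ i ∈ Finset.range N, c (x - i • u) := by
  simp only [average, postcomp_apply, Finset.sum_smul, Finset.sum_apply, single_pow_smul_apply,
    AddMonoidHom.coe_mulLeft]

lemma abs_average_le (hB : ∀ x, |r x| ≤ B) (u : G) (N : ℕ) (x : G) : |average u N r x| ≤ B := by
  have B_nonneg : 0 ≤ B := (abs_nonneg _).trans (hB 0)
  have abs_sum_le : |∑ i ∈ Finset.range N, r (x - i • u)| ≤ N * B :=
    calc |∑ i ∈ Finset.range N, r (x - i • u)|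
        ≤ ∑ i ∈ Finset.range N, |r (x - i • u)| := Finset.abs_sum_le_sum_abs _ _
      _ ≤ ∑ _i ∈ Finset.range N, B := Finset.sum_le_sum fun i _ ↦ hB _
      _ = N * B := by rw [Finset.sum_const, Finset.card_range, nsmul_eq_mul]
  rw [average_apply, abs_mul, abs_of_nonneg (by positivity)]
  exact inv_mul_le_of_le_mul₀ N.cast_nonneg B_nonneg abs_sum_le

lemma average_eq_self {u : G} {N : ℕ} (hN : N ≠ 0) {c : G → ℝ} (hc : diff u • c = 0) :
    average u N c = c := by
  ext x
  have translate (i : ℕ) : c (x - i • u) = c x := by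
    have h := diff_mem_ann.mp (nsmul_mem (mem_periods.mpr (mem_ann.mpr hc)) i) (x - i • u)
    rw [← h, sub_add_cancel]
  simp only [average_apply, translate, Finset.sum_const, Finset.card_range, nsmul_eq_mul]
  exact inv_mul_cancel_left₀ (Nat.cast_ne_zero.mpr hN) (c x)

lemma tendsto_diff_smul_average (hB : ∀ x, |r x| ≤ B) (u x : G) :
    Tendsto (fun N ↦ (diff u • average u N r) x) atTop (𝓝 0) := by
  have telescope (N : ℕ) : (diff u • average u N r) x = (N : ℝ)⁻¹ * (r (x - N • u) - r x) := by
    rw [average, ← map_smul, smul_smul, diff, mul_geom_sum, sub_smul, one_smul, postcomp_apply,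
      Pi.sub_apply, single_pow_smul_apply, AddMonoidHom.coe_mulLeft]
  simp only [telescope]
  refine tendsto_inv_atTop_nhds_zero_nat.zero_mul_isBoundedUnder_le
    (isBoundedUnder_of ⟨B + B, fun N ↦ ?_⟩)
  exact (abs_sub _ _).trans (add_le_add (hB _) (hB _))

lemma tendsto_smul_apply {ι : Type*} {F : Filter ι} {a : ι → G → ℝ} {e : G → ℝ}
    (h : ∀ x, Tendsto (a · x) F (𝓝 (e x))) (p : ℤ[G]) (x : G) :
    Tendsto (fun i ↦ (p • a i) x) F (𝓝 ((p • e) x)) := by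
  simp only [smul_apply_eq_sum]
  exact tendsto_finsetSum _ fun v _ ↦ (h _).const_smul _

lemma exists_mean (hB : ∀ x, |r x| ≤ B) (u : G) :
    ∃ e : G → ℝ, (∀ x, |e x| ≤ B) ∧ diff u • e = 0 ∧
      ∀ p : ℤ[G], diff u • p • r = 0 → p • e = p • r := by
  have exists_limit (x : G) : ∃ y ∈ Set.Icc (-B) B,
      Tendsto (fun N ↦ average u N r x) (hyperfilter ℕ) (𝓝 y) :=
    isCompact_Icc.ultrafilter_le_nhds ((hyperfilter ℕ).map _)
      (tendsto_principal.mpr (.of_forall fun N ↦ abs_le.mp (abs_average_le hB u N x)))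
  choose e he_mem he using exists_limit
  refine ⟨e, fun x ↦ abs_le.mpr (he_mem x), funext fun x ↦ ?_, fun p hp ↦ funext fun x ↦ ?_⟩
  · exact tendsto_nhds_unique (tendsto_smul_apply he _ x)
      ((tendsto_diff_smul_average hB u x).mono_left Nat.hyperfilter_le_atTop)
  · refine tendsto_nhds_unique (tendsto_smul_apply he p x) (tendsto_const_nhds.congr' ?_)
    filter_upwards [Nat.hyperfilter_le_atTop (eventually_ne_atTop 0)] with N hN
    rw [smul_average, average_eq_self hN hp]

lemma mem_of_prod_diff_smul_eq_zero {T : AddSubgroup (G → ℝ)} {J : Ideal ℤ[G]} (s : Finset G)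
    (hT : ∀ u ∈ s, ∀ e : G → ℝ, (∃ B, ∀ x, |e x| ≤ B) → J ≤ ann e → diff u • e = 0 → e ∈ T)
    (hB : ∀ x, |r x| ≤ B) (hJ : J ≤ ann r) (hs : (∏ u ∈ s, diff u) • r = 0) : r ∈ T := by
  classical
  induction s using Finset.induction_on generalizing r B with
  | empty =>
    rw [Finset.prod_empty, one_smul] at hs
    exact hs ▸ T.zero_mem
  | insert u s hu ih =>
    rw [Finset.prod_insert hu, mul_smul] at hs
    obtain ⟨e, heB, hue, he⟩ := exists_mean hB u
    have hJe : J ≤ ann e := fun p hp ↦ by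
      have hpr := mem_ann.mp (hJ hp)
      rw [mem_ann, he p (by rw [hpr, smul_zero]), hpr]
    have hJre : J ≤ ann (r - e) := fun p hp ↦ by
      rw [mem_ann, smul_sub, mem_ann.mp (hJ hp), mem_ann.mp (hJe hp), sub_zero]
    have hre : r - e ∈ T := ih (fun v hv ↦ hT v (Finset.mem_insert_of_mem hv))
      (fun x ↦ (abs_sub (r x) (e x)).trans (add_le_add (hB x) (heB x))) hJre
      (by rw [smul_sub, he _ hs, sub_self])
    have heT : e ∈ T := hT u (Finset.mem_insert_self u s) e ⟨B, heB⟩ hJe hue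
    exact sub_add_cancel r e ▸ add_mem hre heT

end Means

section RealDecomposition

open AddMonoidAlgebra Module

variable {d k : ℕ}

lemma mem_layerSums_of_le_periodSpan {I : Ideal ℤ[Fin d → ℤ]}
    (hI : ∀ W : Submodule ℚ (Fin d → ℚ), finrank ℚ W < k →
      ∃ s : Finset (Fin d → ℤ), (∀ u ∈ s, intVecQ u ∉ W) ∧ ∏ u ∈ s, diff u ∈ I)
    {W : Submodule ℚ (Fin d → ℚ)} (hW : finrank ℚ W ≤ k) {r : (Fin d → ℤ) → ℝ} {B : ℝ}
    (hB : ∀ x, |r x| ≤ B) (hIr : I ≤ ann r) (hWr : W ≤ periodSpan (ann r)) :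
    r ∈ layerSums d k k := by
  induction h : k - finrank ℚ W generalizing W r B with
  | zero =>
    have hmem : r ∈ layer ℝ k W :=
      ⟨(core_le k W).trans hWr, hWr.trans (periodSpan_mono Ideal.le_radical)⟩
    exact layer_le_layerSums (Nat.sub_eq_zero_iff_le.mp h) hmem
  | succ j ih =>
    obtain ⟨s, hsW, hsI⟩ := hI W (by lia)
    refine mem_of_prod_diff_smul_eq_zero (T := (layerSums d k k).toAddSubgroup) s
      (fun u hu e ⟨B', hB'⟩ hann hue ↦ ?_) hB le_rfl (mem_ann.mp (hIr hsI))
    have hrank : finrank ℚ ↥(W ⊔ Submodule.span ℚ {intVecQ u}) = finrank ℚ W + 1 :=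
      Submodule.finrank_sup_span_singleton (hsW u hu)
    refine ih (W := W ⊔ Submodule.span ℚ {intVecQ u}) (by lia) hB' (hIr.trans hann)
      (sup_le (hWr.trans (periodSpan_mono hann)) ?_) (by lia)
    rw [Submodule.span_singleton_le_iff_mem]
    exact intVecQ_mem_periodSpan_of_mem (mem_ann.mpr hue)

end RealDecomposition

section Dilation

open AddMonoidAlgebra

variable {G : Type*} [AddCommGroup G] {c : G → ℤ} {q : ℤ[G]} {B : ℤ}

/-- The substitution `X ↦ X ^ n` in Laurent polynomials. -/
noncomputable def dilate (n : ℕ) : ℤ[G] →+* ℤ[G] :=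
  mapDomainRingHom ℤ (nsmulAddMonoidHom (α := G) n)

lemma dilate_single (n : ℕ) (v : G) (a : ℤ) : dilate n (single v a) = single (n • v) a := by
  simp [dilate]

lemma dilate_one (q : ℤ[G]) : dilate 1 q = q := by
  induction q using AddMonoidAlgebra.induction_linear with
  | zero => exact map_zero _
  | add p q hp hq => rw [map_add, hp, hq]
  | single v a => rw [dilate_single, one_nsmul]

lemma dilate_mul (m n : ℕ) (q : ℤ[G]) : dilate (m * n) q = dilate m (dilate n q) := by
  induction q using AddMonoidAlgebra.induction_linear with
  | zero => simp only [map_zero]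
  | add p q hp hq => simp only [map_add, hp, hq]
  | single v a => simp only [dilate_single, mul_nsmul']

lemma dilate_eq_sum (n : ℕ) (q : ℤ[G]) :
    dilate n q = ∑ v ∈ q.coeff.support, single (n • v) (q.coeff v) := by
  conv_lhs => rw [← sum_coeff_single q, Finsupp.sum, map_sum]
  simp only [dilate_single]

lemma natCast_dvd_pow_sub_dilate {p : ℕ} (hp : p.Prime) (q : ℤ[G]) :
    (p : ℤ[G]) ∣ q ^ p - dilate p q := by
  induction q using AddMonoidAlgebra.induction_linear with
  | zero =>
    rw [zero_pow hp.ne_zero, map_zero, sub_zero]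
    exact dvd_zero _
  | add f g hf hg =>
    obtain ⟨r, hr⟩ := exists_add_pow_prime_eq hp f g
    have split : (f + g) ^ p - dilate p (f + g) =
        (f ^ p - dilate p f) + (g ^ p - dilate p g) + p * (f * g * r) := by
      rw [hr, map_add]
      ring
    rw [split]
    exact dvd_add (dvd_add hf hg) (dvd_mul_right _ _)
  | single v a =>
    have fermat : (p : ℤ) ∣ a ^ p - a :=
      (Int.ModEq.pow_prime_eq_self hp a).symm.dvd
    obtain ⟨b, hb⟩ := fermat
    refine ⟨single (p • v) b, ?_⟩
    rw [AddMonoidAlgebra.single_pow, dilate_single, ← single_sub, hb, natCast_def,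
      single_mul_single, zero_add]

lemma abs_dilate_smul_apply_le (hB : ∀ x, |c x| ≤ B) (n : ℕ) (q : ℤ[G]) (x : G) :
    |(dilate n q • c) x| ≤ (∑ v ∈ q.coeff.support, |q.coeff v|) * B := by
  rw [dilate_eq_sum, Finset.sum_smul, Finset.sum_apply, Finset.sum_mul]
  simp only [single_smul_apply]
  refine (Finset.abs_sum_le_sum_abs _ _).trans (Finset.sum_le_sum fun v _ ↦ ?_)
  rw [smul_eq_mul, abs_mul]
  exact mul_le_mul_of_nonneg_left (hB _) (abs_nonneg _)

-- Modulo `p` the dilation is the Frobenius, so the values of `dilate p q • c` are multiples of `p`.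
lemma dilate_mem_ann_of_prime {p : ℕ} (hp : p.Prime) (hq : q ∈ ann c)
    (hlt : ∀ x, |(dilate p q • c) x| < p) : dilate p q ∈ ann c := by
  obtain ⟨g, hg⟩ := natCast_dvd_pow_sub_dilate hp q
  have hqp : q ^ p • c = 0 := mem_ann.mp (Ideal.pow_mem_of_mem _ hq p hp.pos)
  have smul_eq : dilate p q • c = -(p : ℤ[G]) • g • c := by
    rw [neg_smul, smul_smul, ← hg, sub_smul, hqp, zero_sub, neg_neg]
  refine mem_ann.mpr (funext fun x ↦ Int.eq_zero_of_abs_lt_dvd ?_ (hlt x))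
  rw [smul_eq, neg_smul, Pi.neg_apply, Nat.cast_smul_eq_nsmul, Pi.smul_apply, nsmul_eq_mul]
  exact (dvd_mul_right _ _).neg_right

lemma dilate_mem_ann (hB : ∀ x, |c x| ≤ B) (hq : q ∈ ann c) {n : ℕ} (hn : n ≠ 0)
    (hlt : ∀ p ∈ n.primeFactors, (∑ v ∈ q.coeff.support, |q.coeff v|) * B < p) :
    dilate n q ∈ ann c := by
  induction n using induction_on_primes with
  | zero => exact absurd rfl hn
  | one => rwa [dilate_one]
  | prime_mul p n hp ih =>
    have hn' : n ≠ 0 := right_ne_zero_of_mul hn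
    rw [Nat.primeFactors_mul hp.ne_zero hn', hp.primeFactors] at hlt
    rw [dilate_mul]
    refine dilate_mem_ann_of_prime hp
      (ih hn' fun r hr ↦ hlt r (Finset.mem_union_right _ hr)) fun x ↦ ?_
    rw [← dilate_mul]
    exact (abs_dilate_smul_apply_le hB _ q x).trans_lt
      (hlt p (Finset.mem_union_left _ (Finset.mem_singleton_self p)))

lemma mul_prod_one_sub_mem {R ι : Type*} [CommRing R] {I : Ideal R} {s : Finset ι} {y b : ι → R}
    {b₀ : R} (h : ∀ j : ℕ, b₀ + ∑ i ∈ s, b i * y i ^ j ∈ I) :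
    b₀ * ∏ i ∈ s, (1 - y i) ∈ I := by
  classical
  induction s using Finset.induction_on generalizing b b₀ with
  | empty => simpa using h 0
  | insert k s hk ih =>
    rw [Finset.prod_insert hk, ← mul_assoc]
    refine ih (b := fun i ↦ b i * (y i - y k)) fun j ↦ ?_
    have eliminate := I.sub_mem (h (j + 1)) (I.mul_mem_left (y k) (h j))
    have cross : ∑ i ∈ s, b i * (y i - y k) * y i ^ j =
        ∑ i ∈ s, b i * y i ^ (j + 1) - y k * ∑ i ∈ s, b i * y i ^ j := by
      rw [Finset.mul_sum, ← Finset.sum_sub_distrib]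
      exact Finset.sum_congr rfl fun i _ ↦ by ring
    rw [Finset.sum_insert hk, Finset.sum_insert hk] at eliminate
    rw [cross]
    convert eliminate using 1
    ring

lemma exists_prod_diff_nsmul_mem_ann [DecidableEq G] (hB : ∀ x, |c x| ≤ B) (hq : q ∈ ann c)
    (h₀ : q.coeff 0 ≠ 0) :
    ∃ n : ℕ, n ≠ 0 ∧ ∏ v ∈ q.coeff.support.erase 0, diff (n • v) ∈ ann c := by
  obtain ⟨K, hK⟩ := exists_nat_ge ((∑ v ∈ q.coeff.support, |q.coeff v|) * B)
  set n := K.factorial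
  have dilate_mem (j : ℕ) : dilate (1 + j * n) q ∈ ann c := by
    refine dilate_mem_ann hB hq (by lia) fun p hp ↦ hK.trans_lt ?_
    have hp' := Nat.prime_of_mem_primeFactors hp
    by_contra! hpK
    have p_dvd_n : p ∣ n := hp'.dvd_factorial.mpr (by exact_mod_cast hpK)
    exact hp'.not_dvd_one
      ((Nat.dvd_add_left (p_dvd_n.mul_left j)).mp (Nat.dvd_of_mem_primeFactors hp))
  have expand (j : ℕ) : dilate (1 + j * n) q = single 0 (q.coeff 0) +
      ∑ v ∈ q.coeff.support.erase 0, single v (q.coeff v) * single (n • v) 1 ^ j := by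
    rw [dilate_eq_sum, ← Finset.add_sum_erase _ _ (Finsupp.mem_support_iff.mpr h₀), smul_zero]
    simp only [AddMonoidAlgebra.single_pow, single_mul_single, one_pow, mul_one, add_nsmul,
      one_nsmul, mul_nsmul']
  have mul_prod_mem := mul_prod_one_sub_mem (I := ann c) fun j ↦ expand j ▸ dilate_mem j
  have prod_mem : ∏ v ∈ q.coeff.support.erase 0, (1 - single (n • v) 1 : ℤ[G]) ∈ ann c := by
    rw [mem_ann, mul_smul] at mul_prod_mem
    refine mem_ann.mpr (funext fun x ↦ ?_)
    have h := congrFun mul_prod_mem x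
    rw [single_smul_apply, sub_zero] at h
    exact (smul_eq_zero.mp h).resolve_left h₀
  refine ⟨n, K.factorial_ne_zero, ?_⟩
  simp only [diff, ← neg_sub (1 : ℤ[G]), Finset.prod_neg]
  exact Ideal.mul_mem_left _ _ prod_mem

end Dilation

section Periodizers

open AddMonoidAlgebra Module

variable {G : Type*} [AddCommGroup G] {d : ℕ}

lemma exists_nsmul_add_notMem {H : AddSubgroup G} {v : G}
    (hv : ¬IsOfFinAddOrder (v : G ⧸ H)) (s : Finset G) : ∃ n : ℕ, ∀ w ∈ s, n • v + w ∉ H := by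
  classical
  obtain ⟨_, ⟨n, rfl⟩, hn⟩ := (Set.infinite_range_of_injective
    (injective_nsmul_iff_not_isOfFinAddOrder.mpr hv)).exists_notMem_finset
      (s.image fun w ↦ ((-w : G) : G ⧸ H))
  refine ⟨n, fun w hw hmem ↦ hn (Finset.mem_image.mpr ⟨w, hw, ?_⟩)⟩
  dsimp only
  rwa [← QuotientAddGroup.mk_nsmul, QuotientAddGroup.eq, neg_neg, add_comm]

lemma coeff_diff_mul (v : G) (f : ℤ[G]) (u : G) :
    (diff v * f).coeff u = f.coeff (-v + u) - f.coeff u := by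
  rw [diff, sub_mul, one_mul, coeff_sub, Finsupp.sub_apply, coeff_single_mul_apply, one_mul]

-- On `W` the coefficients of `(X ^ (N v) - 1) f` are those of `-f` once `N v + supp f` avoids `W`.
lemma exists_prod_diff_mem_ann {c : (Fin d → ℤ) → ℤ} {B : ℤ} (hB : ∀ x, |c x| ≤ B)
    {W : Submodule ℚ (Fin d → ℚ)} {f : ℤ[Fin d → ℤ]} (hf₀ : f.coeff 0 ≠ 0)
    (hf : ∀ w, f.coeff w ≠ 0 → intVecQ w ∈ W → w = 0) {v : Fin d → ℤ} (hv : intVecQ v ∉ W)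
    (hvf : diff v ∈ ann (f • c)) :
    ∃ s : Finset (Fin d → ℤ), (∀ u ∈ s, intVecQ u ∉ W) ∧ ∏ u ∈ s, diff u ∈ ann c := by
  classical
  obtain ⟨N, hN⟩ := exists_nsmul_add_notMem (not_isOfFinAddOrder_mk hv) f.coeff.support
  set q := diff (N • v) * f
  have hq : q ∈ ann c := by
    rw [mem_ann, mul_smul, ← mem_ann]
    exact nsmul_mem (mem_periods.mpr hvf) N
  have coeff_q {u : Fin d → ℤ} (hu : intVecQ u ∈ W) : q.coeff u = -f.coeff u := by
    have hNu : f.coeff (-(N • v) + u) = 0 := by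
      by_contra hne
      refine hN _ (Finsupp.mem_support_iff.mpr hne) ?_
      rwa [add_neg_cancel_left, mem_latticePoints]
    rw [coeff_diff_mul, hNu, zero_sub]
  have hq₀ : q.coeff 0 ≠ 0 := by
    rw [coeff_q (intVecQ_zero ▸ W.zero_mem)]
    exact neg_ne_zero.mpr hf₀
  obtain ⟨n, hn, hprod⟩ := exists_prod_diff_nsmul_mem_ann hB hq hq₀
  refine ⟨(q.coeff.support.erase 0).image (n • ·), Finset.forall_mem_image.mpr fun u hu huW ↦ ?_,
    by rwa [Finset.prod_image (nsmul_right_injective hn).injOn]⟩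
  obtain ⟨hu₀, hqu⟩ := Finset.mem_erase.mp hu
  rw [intVecQ_nsmul, nsmul_mem_iff hn] at huW
  rw [Finsupp.mem_support_iff, coeff_q huW, neg_ne_zero] at hqu
  exact hu₀ (hf u hqu huW)

lemma polyApply_eq_smul {f : (Fin d → ℤ) → ℤ} (hf : IsPoly f) (c : (Fin d → ℤ) → ℤ) :
    polyApply f c = (ofCoeff (Finsupp.ofSupportFinite f hf) : ℤ[Fin d → ℤ]) • c := by
  ext x
  rw [smul_apply_eq_sum]
  refine finsum_eq_sum_of_support_subset _ fun v hv ↦ ?_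
  exact Finsupp.mem_support_iff.mpr (left_ne_zero_of_mul hv)

/-- The coordinatewise inclusion of `ℚ ^ d` in `ℝ ^ d`. -/
noncomputable def ratCastVec (d : ℕ) : (Fin d → ℚ) →ₗ[ℚ] (Fin d → ℝ) :=
  (Algebra.linearMap ℚ ℝ).compLeft (Fin d)

lemma ratCastVec_intVecQ (u : Fin d → ℤ) : ratCastVec d (intVecQ u) = intVecR u := by
  ext i
  simp [ratCastVec, intVecQ, intVecR]

/-- The rational points of a real subspace. -/
noncomputable def ratPoints (V : Submodule ℝ (Fin d → ℝ)) : Submodule ℚ (Fin d → ℚ) :=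
  (V.restrictScalars ℚ).comap (ratCastVec d)

lemma intVecQ_mem_ratPoints {V : Submodule ℝ (Fin d → ℝ)} {u : Fin d → ℤ} :
    intVecQ u ∈ ratPoints V ↔ intVecR u ∈ V := by
  rw [ratPoints, Submodule.mem_comap, ratCastVec_intVecQ, Submodule.restrictScalars_mem]

lemma ratPoints_ne_top {V : Submodule ℝ (Fin d → ℝ)} (hV : V ≠ ⊤) : ratPoints V ≠ ⊤ := by
  contrapose! hV
  rw [eq_top_iff, ← (Pi.basisFun ℝ (Fin d)).span_eq, Submodule.span_le]
  rintro _ ⟨i, rfl⟩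
  have h : intVecQ (Pi.single i 1) ∈ ratPoints V := hV ▸ Submodule.mem_top
  rw [intVecQ_mem_ratPoints] at h
  have cast_single : Pi.basisFun ℝ (Fin d) i = intVecR (Pi.single i 1) := by
    ext j
    simp [intVecR, Pi.single_apply]
  rwa [SetLike.mem_coe, cast_single]

lemma exists_le_finrank_eq {K E : Type*} [Field K] [AddCommGroup E] [Module K E]
    [FiniteDimensional K E] (V₀ : Submodule K E) {n : ℕ} (hV₀ : finrank K V₀ ≤ n)
    (hn : n ≤ finrank K E) : ∃ V, V₀ ≤ V ∧ finrank K V = n := by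
  induction n, hV₀ using Nat.le_induction with
  | base => exact ⟨V₀, le_rfl, rfl⟩
  | succ n _ ih =>
    obtain ⟨V, hV, hVn⟩ := ih (by lia)
    have hne : V ≠ ⊤ := by
      rintro rfl
      rw [finrank_top] at hVn
      lia
    obtain ⟨x, -, hx⟩ := SetLike.exists_of_lt hne.lt_top
    exact ⟨V ⊔ Submodule.span K {x}, le_sup_of_le_left hV,
      by rw [Submodule.finrank_sup_span_singleton hx, hVn]⟩

lemma exists_le_ratPoints (W : Submodule ℚ (Fin d → ℚ)) {n : ℕ} (hW : finrank ℚ W ≤ n)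
    (hn : n ≤ d) : ∃ V : Submodule ℝ (Fin d → ℝ), finrank ℝ V = n ∧ W ≤ ratPoints V := by
  obtain ⟨b, -, hb, -⟩ := Submodule.exists_fun_fin_finrank_span_eq ℚ (W : Set (Fin d → ℚ))
  have hrank : finrank ℝ (Submodule.span ℝ (Set.range (ratCastVec d ∘ b))) ≤ n :=
    (finrank_range_le_card _).trans (by simpa using hW)
  obtain ⟨V, hV, hVn⟩ := exists_le_finrank_eq _ hrank (by simpa using hn)
  refine ⟨V, hVn, Submodule.subset_span.trans (hb.ge.trans (Submodule.span_le.mpr ?_))⟩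
  rintro _ ⟨i, rfl⟩
  exact hV (Submodule.subset_span ⟨i, rfl⟩)

lemma StronglyPeriodic.exists_diff_mem_ann {c : (Fin d → ℤ) → ℤ} (hc : StronglyPeriodic c)
    {W : Submodule ℚ (Fin d → ℚ)} (hW : W ≠ ⊤) : ∃ v, intVecQ v ∉ W ∧ diff v ∈ ann c := by
  obtain ⟨v, hv, hper⟩ := hc
  by_contra! hmem
  refine hW (top_le_iff.mp ?_)
  rw [← hv.span_eq_top_of_card_eq_finrank' (by simp), Submodule.span_le]
  rintro _ ⟨i, rfl⟩
  by_contra hi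
  exact hmem (v i) hi (diff_mem_ann.mpr (hper i))
lemma exists_prod_diff_mem_ann_of_periodizer {c : (Fin d → ℤ) → ℤ} {B : ℤ} (hB : ∀ x, |c x| ≤ B)
    {f : (Fin d → ℤ) → ℤ} (hf : IsPoly f) (hfc : StronglyPeriodic (polyApply f c))
    {V : Submodule ℝ (Fin d → ℝ)} (hV : V ≠ ⊤)
    (hfV : (intVecR '' Function.support f) ∩ (V : Set (Fin d → ℝ)) = {0}) :
    ∃ s : Finset (Fin d → ℤ), (∀ u ∈ s, intVecR u ∉ V) ∧ ∏ u ∈ s, diff u ∈ ann c := by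
  obtain ⟨v, hv, hvf⟩ := hfc.exists_diff_mem_ann (ratPoints_ne_top hV)
  rw [polyApply_eq_smul hf] at hvf
  have eq_zero {u : Fin d → ℤ} (hu : intVecR u = 0) : u = 0 :=
    funext fun i ↦ Int.cast_eq_zero.mp (congrFun hu i)
  have hf₀ : f 0 ≠ 0 := by
    obtain ⟨⟨u, hu, hu₀⟩, -⟩ := hfV.ge (Set.mem_singleton 0)
    exact eq_zero hu₀ ▸ hu
  have hfW (w : Fin d → ℤ) (hw : f w ≠ 0) (hwV : intVecQ w ∈ ratPoints V) : w = 0 :=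
    eq_zero (hfV.le ⟨⟨w, hw, rfl⟩, intVecQ_mem_ratPoints.mp hwV⟩)
  simpa only [intVecQ_mem_ratPoints] using exists_prod_diff_mem_ann hB hf₀ hfW hv hvf

end Periodizers

/-- If `1 ≤ k ≤ d` and a `d`-dimensional configuration `c` has, for every
`(k−1)`-dimensional linear subspace `V ⊆ ℝ^d`, a periodizer `f` with `supp(f) ∩ V = {0}`,
then `c` is a finite sum of `k`-periodic functions. -/
theorem periodic_decomposition_with_specific_periodizers
    {d k : ℕ} (hk1 : 1 ≤ k) (hkd : k ≤ d)
    (c : (Fin d → ℤ) → ℤ) (hconf : (Set.range c).Finite)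
    (h : ∀ V : Submodule ℝ (Fin d → ℝ), Module.finrank ℝ V = k - 1 →
      ∃ f : (Fin d → ℤ) → ℤ, IsPoly f ∧ StronglyPeriodic (polyApply f c) ∧
        (intVecR '' Function.support f) ∩ (V : Set (Fin d → ℝ)) = {0}) :
    ∃ (m : ℕ) (cs : Fin m → ((Fin d → ℤ) → ℤ)),
      (∀ i, KPeriodic k (cs i)) ∧ c = ∑ i, cs i := by
  obtain ⟨B, hB⟩ : ∃ B, ∀ x, |c x| ≤ B := by
    obtain ⟨B, hB⟩ := (hconf.image (|·|)).bddAbove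
    exact ⟨B, fun x ↦ hB ⟨c x, ⟨x, rfl⟩, rfl⟩⟩
  have exists_prod_mem (W : Submodule ℚ (Fin d → ℚ)) (hW : Module.finrank ℚ W < k) :
      ∃ s : Finset (Fin d → ℤ), (∀ u ∈ s, intVecQ u ∉ W) ∧ ∏ u ∈ s, diff u ∈ ann c := by
    obtain ⟨V, hV, hWV⟩ := exists_le_ratPoints W (n := k - 1) (by lia) (by lia)
    obtain ⟨f, hf, hfc, hfV⟩ := h V hV
    have hV_top : V ≠ ⊤ := by
      rintro rfl
      rw [finrank_top, Module.finrank_fin_fun] at hV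
      lia
    obtain ⟨s, hsV, hsc⟩ := exists_prod_diff_mem_ann_of_periodizer hB hf hfc hV_top hfV
    exact ⟨s, fun u hu huW ↦ hsV u hu (intVecQ_mem_ratPoints.mp (hWV huW)), hsc⟩
  have hB_real (x : Fin d → ℤ) : |toReal d c x| ≤ B := by
    rw [postcomp_apply, Int.coe_castAddHom, ← Int.cast_abs]
    exact Int.cast_le.mpr (hB x)
  have hreal : toReal d c ∈ layerSums d k k :=
    mem_layerSums_of_le_periodSpan exists_prod_mem (W := ⊥) (by simp) hB_real
      (ann_postcomp_of_injective Int.cast_injective c).ge bot_le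
  exact exists_sum_eq_of_mem_periodicSums (mem_periodicSums_of_toReal_mem_layerSums le_rfl hreal)

end PaperFormal
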